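/- (Elliptical potential) Let d ≥ 1, λ ≥ 1, T ≥ 1, and A_1,…,A_T ∈ ℝ^d with ‖A_t‖₂ ≤ 1 for all t. Then Σ_{t=1}^T ‖A_t‖²_{V_t(λ)^{-1}} ≤ 2 d log((dλ + T)/(dλ)). -/

import Mathlib

open Finset Matrix

/-- `mnorm M x = √(xᵀ M x)`, the norm associated to a positive definite matrix `M`. -/
noncomputable def mnorm {d : ℕ} (M : Matrix (Fin d) (Fin d) ℝ) (x : Fin d → ℝ) : ℝ :=
  Real.sqrt (x ⬝ᵥ M.mulVec x)

/-- `Vmat A lam t = lam • I + ∑_{s=1}^{t-1} A_s A_sᵀ`. -/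
noncomputable def Vmat {d : ℕ} (A : ℕ → Fin d → ℝ) (lam : ℝ) (t : ℕ) :
    Matrix (Fin d) (Fin d) ℝ :=
  lam • (1 : Matrix (Fin d) (Fin d) ℝ) + ∑ s ∈ Finset.Ico 1 t, vecMulVec (A s) (A s)


lemma Vmat_psd {d : ℕ} (A : ℕ → Fin d → ℝ) (t : ℕ) :
    (∑ s ∈ Finset.Ico 1 t, vecMulVec (A s) (A s)).PosSemidef := by
  apply posSemidef_sum
  intro s _
  simpa using posSemidef_vecMulVec_self_star (A s)

lemma Vmat_posDef {d : ℕ} (A : ℕ → Fin d → ℝ) (lam : ℝ) (hlam : 1 ≤ lam) (t : ℕ) :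
    (Vmat A lam t).PosDef := by
  unfold Vmat
  apply PosDef.add_posSemidef _ (Vmat_psd A t)
  exact PosDef.one.smul (by linarith : (0:ℝ) < lam)

lemma quad_le_one {d : ℕ} (A : ℕ → Fin d → ℝ) (lam : ℝ) (hlam : 1 ≤ lam) (t : ℕ)
    (a : Fin d → ℝ) (ha : a ⬝ᵥ a ≤ 1) : a ⬝ᵥ (Vmat A lam t)⁻¹ *ᵥ a ≤ 1 := by
  set y := (Vmat A lam t)⁻¹ *ᵥ a with hy
  have hV : Vmat A lam t *ᵥ y = a := by
    rw [hy, mulVec_mulVec, mul_nonsing_inv _ ((isUnit_iff_isUnit_det _).1 (Vmat_posDef A lam hlam t).isUnit),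
      one_mulVec]
  have h1 : y ⬝ᵥ a = lam * (y ⬝ᵥ y) + y ⬝ᵥ (∑ s ∈ Finset.Ico 1 t, vecMulVec (A s) (A s)) *ᵥ y := by
    conv_lhs => rw [← hV]
    simp [Vmat, add_mulVec, smul_mulVec, dotProduct_add]
  have h2 := (Vmat_psd A t).dotProduct_mulVec_nonneg y
  simp only [star_trivial] at h2
  have h3 : 0 ≤ y ⬝ᵥ y := by simpa using dotProduct_star_self_nonneg y
  have h4 : 0 ≤ (a - y) ⬝ᵥ (a - y) := by simpa using dotProduct_star_self_nonneg (a - y)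
  simp only [sub_dotProduct, dotProduct_sub] at h4
  have h5 := dotProduct_comm a y
  nlinarith

lemma det_step {d : ℕ} (A : ℕ → Fin d → ℝ) (lam : ℝ) (hlam : 1 ≤ lam) (t : ℕ) (ht : 1 ≤ t) :
    (Vmat A lam (t+1)).det = (Vmat A lam t).det * (1 + A t ⬝ᵥ (Vmat A lam t)⁻¹ *ᵥ A t) := by
  have h : Vmat A lam (t+1) = Vmat A lam t + replicateCol Unit (A t) * replicateRow Unit (A t) := by
    unfold Vmat
    rw [Finset.sum_Ico_succ_top ht, add_assoc, ← vecMulVec_eq]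
  rw [h, det_add_replicateCol_mul_replicateRow
    ((isUnit_iff_isUnit_det _).1 (Vmat_posDef A lam hlam t).isUnit)]
  congr 1
  simp [det_unique, Matrix.mul_assoc, Matrix.mul_apply, mulVec, dotProduct]

lemma sum_le {d : ℕ} (A : ℕ → Fin d → ℝ) (lam : ℝ) (hlam : 1 ≤ lam) (T : ℕ)
    (hA : ∀ t ∈ Finset.Icc 1 T, A t ⬝ᵥ A t ≤ 1) :
    ∑ t ∈ Finset.Icc 1 T, (mnorm (Vmat A lam t)⁻¹ (A t)) ^ 2 ≤
      2 * (Real.log (Vmat A lam (T+1)).det - d * Real.log lam) := by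
  induction T with
  | zero => simp [Vmat]
  | succ n ih =>
    rw [Finset.sum_Icc_succ_top (by omega)]
    have ih' := ih (fun t ht => hA t (by simp at ht ⊢; omega))
    have hq0 := (Vmat_posDef A lam hlam (n+1)).inv.posSemidef.dotProduct_mulVec_nonneg (A (n+1))
    simp only [star_trivial] at hq0
    have hq1 := quad_le_one A lam hlam (n+1) (A (n+1)) (hA _ (by simp))
    rw [det_step A lam hlam (n+1) (by omega), Real.log_mul (Vmat_posDef A lam hlam (n+1)).det_pos.ne' (by linarith),
      mnorm, Real.sq_sqrt hq0]
    generalize A (n+1) ⬝ᵥ (Vmat A lam (n+1))⁻¹ *ᵥ A (n+1) = q at *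
    have h1 := Real.one_sub_inv_le_log_of_pos (show 0 < 1 + q by linarith)
    have h2 : q / 2 ≤ 1 - (1+q)⁻¹ := by
      have : 1 - (1+q)⁻¹ = q / (1+q) := by field_simp; ring
      rw [this]
      gcongr
      linarith
    linarith

lemma log_det_le {d : ℕ} (M : Matrix (Fin d) (Fin d) ℝ) (hM : M.PosDef) (c : ℝ) (hc : 0 < c)
    (h : M.trace ≤ d * c) : Real.log M.det ≤ d * Real.log c := by
  have hd := hM.1.det_eq_prod_eigenvalues
  have ht := hM.1.trace_eq_sum_eigenvalues
  simp only [RCLike.ofReal_real_eq_id, id] at hd ht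
  rw [hd, Real.log_prod (fun i _ => (hM.eigenvalues_pos i).ne')]
  have : ∀ i, Real.log (hM.1.eigenvalues i) ≤ Real.log c + (hM.1.eigenvalues i / c - 1) := by
    intro i
    have := Real.log_le_sub_one_of_pos (div_pos (hM.eigenvalues_pos i) hc)
    rw [Real.log_div (hM.eigenvalues_pos i).ne' hc.ne'] at this
    linarith
  refine (Finset.sum_le_sum fun i _ => this i).trans ?_
  rw [Finset.sum_add_distrib, Finset.sum_sub_distrib, ← Finset.sum_div, ← ht]
  have := (div_le_iff₀ hc).2 h
  simp
  linarith

/-- Elliptical potential lemma. -/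
theorem elliptical_potential
    {d : ℕ} (hd : 1 ≤ d) (lam : ℝ) (hlam : 1 ≤ lam) (T : ℕ) (hT : 1 ≤ T)
    (A : ℕ → Fin d → ℝ) (hA : ∀ t ∈ Finset.Icc 1 T, Real.sqrt (A t ⬝ᵥ A t) ≤ 1) :
    ∑ t ∈ Finset.Icc 1 T, (mnorm (Vmat A lam t)⁻¹ (A t)) ^ 2 ≤
      2 * d * Real.log ((d * lam + T) / (d * lam)) := by
  have hA' : ∀ t ∈ Finset.Icc 1 T, A t ⬝ᵥ A t ≤ 1 := fun t ht => by
    simpa using (Real.sqrt_le_left (by norm_num)).1 (hA t ht)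
  have hd' : (0:ℝ) < d := by exact_mod_cast hd
  have hl : 0 < lam := by linarith
  have hc : 0 < (d * lam + T) / d := by positivity
  have htr : (Vmat A lam (T+1)).trace ≤ d * ((d * lam + T) / d) := by
    rw [mul_div_cancel₀ _ hd'.ne']
    simp only [Vmat, trace_add, trace_smul, trace_one, trace_sum, trace_vecMulVec, Fintype.card_fin, smul_eq_mul]
    have := Finset.sum_le_sum hA'
    simp at this
    have e : Finset.Ico 1 (T+1) = Finset.Icc 1 T := by ext; simp
    rw [e]
    linarith
  have h1 := sum_le A lam hlam T hA'
  have h2 := log_det_le _ (Vmat_posDef A lam hlam (T+1)) _ hc htr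
  have h3 : Real.log ((d * lam + T) / (d * lam)) = Real.log ((d * lam + T) / d) - Real.log lam := by
    rw [← div_div, Real.log_div hc.ne' hl.ne']
  rw [h3]
  linarith
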